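/- arXiv:1204.3778 — 2 statements merged into one kernel-verified Lean document; each statement's English description precedes it below -/
import Mathlib

section
/- Let (s,x̄) ∈ I × U with x̄ = x(s,t(s,x̄)). Then [∂²/∂s²(x(s,t(s,x̄))), c(s,t(s,x̄))] = 2(1 + t_s(s,x̄)²)·δ(s,t(s,x̄)). -/
/-!
Along a curve `γ` write `x`, `c` for `x ∘ γ`, `c ∘ γ`. Since `x̄ - x` vanishes at `s`,
differentiating the incidence relation `[x̄ - x, c] = 0` twice at `s` leaves
`[x'', c] = -2 [x', c']`. By the Cauchy–Riemann equations `x_s = c_t`, `x_t = -c_s`, the vector `c'`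
is obtained from `x'` by turning the velocity of `γ` through a right angle, so
`[x', c'] = -|γ'|² [x_s, x_t]`. For the graph `γ(s) = (s, t(s, x̄))` the squared speed `|γ'|²` is
`1 + t_s²`.
-/

noncomputable section

/-- `det2 u v` is the determinant of the 2×2 matrix with columns `u` and `v`. -/
def det2 (u v : ℝ × ℝ) : ℝ := u.1 * v.2 - u.2 * v.1

/-- Partial derivative with respect to the first coordinate `s`. -/
def pds (f : ℝ × ℝ → ℝ) (p : ℝ × ℝ) : ℝ := fderiv ℝ f p (1, 0)

/-- Partial derivative with respect to the second coordinate `t`. -/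
def pdt (f : ℝ × ℝ → ℝ) (p : ℝ × ℝ) : ℝ := fderiv ℝ f p (0, 1)

/-- The planar map `x = (A, B)`. -/
def xmap (A B : ℝ × ℝ → ℝ) (p : ℝ × ℝ) : ℝ × ℝ := (A p, B p)

/-- The conjugate map `c = (-D, C)`. -/
def cmap (C D : ℝ × ℝ → ℝ) (p : ℝ × ℝ) : ℝ × ℝ := (-D p, C p)

/-- `x_s = (A_s, B_s)`. -/
def xs (A B : ℝ × ℝ → ℝ) (p : ℝ × ℝ) : ℝ × ℝ := (pds A p, pds B p)

/-- `x_t = (A_t, B_t)`. -/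
def xt (A B : ℝ × ℝ → ℝ) (p : ℝ × ℝ) : ℝ × ℝ := (pdt A p, pdt B p)

/-- `δ = A_s B_t - A_t B_s = [x_s, x_t]`. -/
def deltaMap (A B : ℝ × ℝ → ℝ) (p : ℝ × ℝ) : ℝ :=
  pds A p * pdt B p - pdt A p * pds B p

open Filter Topology

section SecondDerivative

variable {𝕜 E F G : Type*} [NontriviallyNormedField 𝕜]
  [NormedAddCommGroup E] [NormedSpace 𝕜 E] [NormedAddCommGroup F] [NormedSpace 𝕜 F]
  [NormedAddCommGroup G] [NormedSpace 𝕜 G]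

lemma deriv_deriv_of_bilinear (β : E →L[𝕜] F →L[𝕜] G) {u : 𝕜 → E} {v : 𝕜 → F} {s : 𝕜}
    (hu : ContDiffAt 𝕜 2 u s) (hv : ContDiffAt 𝕜 2 v s) :
    deriv (deriv fun r ↦ β (u r) (v r)) s =
      β (deriv (deriv u) s) (v s) + (2 : 𝕜) • β (deriv u s) (deriv v s) +
        β (u s) (deriv (deriv v) s) := by
  have deriv_eq : deriv (fun r ↦ β (u r) (v r)) =ᶠ[𝓝 s]
      fun r ↦ β (u r) (deriv v r) + β (deriv u r) (v r) := by
    filter_upwards [hu.eventually (by simp), hv.eventually (by simp)] with r hur hvr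
    exact β.deriv_of_bilinear (fun _ ↦ hur.differentiableAt two_ne_zero)
      (fun _ ↦ hvr.differentiableAt two_ne_zero)
  have du := (hu.differentiableAt two_ne_zero).hasDerivAt
  have dv := (hv.differentiableAt two_ne_zero).hasDerivAt
  have ddu : HasDerivAt (deriv u) (deriv (deriv u) s) s :=
    ((hu.derivWithin (m := 1) (by norm_num)).differentiableAt one_ne_zero).hasDerivAt
  have ddv : HasDerivAt (deriv v) (deriv (deriv v) s) s :=
    ((hv.derivWithin (m := 1) (by norm_num)).differentiableAt one_ne_zero).hasDerivAt
  rw [deriv_eq.deriv_eq, ((β.hasDerivAt_of_bilinear (fun _ ↦ du) (fun _ ↦ ddv)).fun_add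
    (β.hasDerivAt_of_bilinear (fun _ ↦ ddu) (fun _ ↦ dv))).deriv]
  module

lemma bilinear_deriv_deriv_of_incident (β : E →L[𝕜] F →L[𝕜] G) {x : 𝕜 → E} {c : 𝕜 → F} {s : 𝕜}
    (hx : ContDiffAt 𝕜 2 x s) (hc : ContDiffAt 𝕜 2 c s)
    (hinc : ∀ᶠ r in 𝓝 s, β (x s - x r) (c r) = 0) :
    β (deriv (deriv x) s) (c s) = -(2 : 𝕜) • β (deriv x s) (deriv c s) := by
  have incident : (fun r ↦ β (x r - x s) (c r)) =ᶠ[𝓝 s] fun _ ↦ 0 := by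
    filter_upwards [hinc] with r hr
    rw [← neg_sub, map_neg, neg_apply, hr, neg_zero]
  have second_deriv_zero : deriv (deriv fun r ↦ β (x r - x s) (c r)) s = 0 := by
    simpa using incident.deriv.deriv_eq
  rw [deriv_deriv_of_bilinear β (hx.sub contDiffAt_const) hc, deriv_sub_const_fun, sub_self,
    map_zero, zero_apply, add_zero] at second_deriv_zero
  rw [eq_neg_of_add_eq_zero_left second_deriv_zero, neg_smul]

end SecondDerivative

lemma isAlt_apply_of_cauchyRiemann {R E F : Type*} [CommRing R] [AddCommGroup E] [Module R E]
    [AddCommGroup F] [Module R F] {ω : E →ₗ[R] E →ₗ[R] F} (hω : ω.IsAlt) {X C : R × R →ₗ[R] E}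
    (h₁ : X (1, 0) = C (0, 1)) (h₂ : X (0, 1) = -C (1, 0)) (v : R × R) :
    ω (X v) (C v) = -(v.1 ^ 2 + v.2 ^ 2) • ω (X (1, 0)) (X (0, 1)) := by
  have apply_eq (L : R × R →ₗ[R] E) : L v = v.1 • L (1, 0) + v.2 • L (0, 1) := by
    rw [← map_smul, ← map_smul, ← map_add]
    simp
  have hC : C v = v.2 • X (1, 0) - v.1 • X (0, 1) := by
    rw [apply_eq C, h₁, h₂]
    module
  rw [apply_eq X, hC]
  simp only [map_add, map_sub, map_smul, LinearMap.add_apply, LinearMap.smul_apply,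
    hω.self_eq_zero, ← hω.neg (X (1, 0)) (X (0, 1))]
  module

theorem bracket_dssx_c_general {𝕜 E F : Type*} [NontriviallyNormedField 𝕜]
    [NormedAddCommGroup E] [NormedSpace 𝕜 E] [NormedAddCommGroup F] [NormedSpace 𝕜 F]
    (ω : E →L[𝕜] E →L[𝕜] F) (hω : ω.toLinearMap₁₂.IsAlt)
    {x c : 𝕜 × 𝕜 → E} {γ : 𝕜 → 𝕜 × 𝕜} {s : 𝕜}
    (hx : ContDiffAt 𝕜 2 x (γ s)) (hc : ContDiffAt 𝕜 2 c (γ s)) (hγ : ContDiffAt 𝕜 2 γ s)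
    (hxs : fderiv 𝕜 x (γ s) (1, 0) = fderiv 𝕜 c (γ s) (0, 1))
    (hxt : fderiv 𝕜 x (γ s) (0, 1) = -fderiv 𝕜 c (γ s) (1, 0))
    (hinc : ∀ᶠ r in 𝓝 s, ω (x (γ s) - x (γ r)) (c (γ r)) = 0) :
    ω (deriv (deriv (x ∘ γ)) s) (c (γ s)) =
      (2 * ((deriv γ s).1 ^ 2 + (deriv γ s).2 ^ 2)) •
        ω (fderiv 𝕜 x (γ s) (1, 0)) (fderiv 𝕜 x (γ s) (0, 1)) := by
  have γ_diff := hγ.differentiableAt two_ne_zero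
  have velocity_bracket : ω (fderiv 𝕜 x (γ s) (deriv γ s)) (fderiv 𝕜 c (γ s) (deriv γ s)) =
      -((deriv γ s).1 ^ 2 + (deriv γ s).2 ^ 2) •
        ω (fderiv 𝕜 x (γ s) (1, 0)) (fderiv 𝕜 x (γ s) (0, 1)) :=
    isAlt_apply_of_cauchyRiemann (X := (fderiv 𝕜 x (γ s)).toLinearMap)
      (C := (fderiv 𝕜 c (γ s)).toLinearMap) hω hxs hxt (deriv γ s)
  calc ω (deriv (deriv (x ∘ γ)) s) (c (γ s))
      = -(2 : 𝕜) • ω (deriv (x ∘ γ) s) (deriv (c ∘ γ) s) :=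
        bilinear_deriv_deriv_of_incident ω (hx.comp s hγ) (hc.comp s hγ) hinc
    _ = -(2 : 𝕜) • ω (fderiv 𝕜 x (γ s) (deriv γ s)) (fderiv 𝕜 c (γ s) (deriv γ s)) := by
        rw [fderiv_comp_deriv s (hx.differentiableAt two_ne_zero) γ_diff,
          fderiv_comp_deriv s (hc.differentiableAt two_ne_zero) γ_diff]
    _ = _ := by
        rw [velocity_bracket]
        module

/-- The bracket `det2` as a continuous bilinear form, so that the product rule for bilinear maps
applies to it. -/
def det2Bilin : ℝ × ℝ →L[ℝ] ℝ × ℝ →L[ℝ] ℝ :=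
  (ContinuousLinearMap.mul ℝ ℝ).bilinearComp (.fst ℝ ℝ ℝ) (.snd ℝ ℝ ℝ) -
    (ContinuousLinearMap.mul ℝ ℝ).bilinearComp (.snd ℝ ℝ ℝ) (.fst ℝ ℝ ℝ)

lemma det2Bilin_apply (u v : ℝ × ℝ) : det2Bilin u v = det2 u v := rfl

lemma det2Bilin_isAlt : det2Bilin.toLinearMap₁₂.IsAlt := fun u ↦
  sub_eq_zero.mpr (mul_comm u.1 u.2)

lemma det2_xs_xt (A B : ℝ × ℝ → ℝ) (p : ℝ × ℝ) : det2 (xs A B p) (xt A B p) = deltaMap A B p := by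
  simp only [det2, xs, xt, deltaMap]
  ring

section Coordinates

variable {A B C D : ℝ × ℝ → ℝ} {p : ℝ × ℝ}

lemma fderiv_xmap_apply (hA : DifferentiableAt ℝ A p) (hB : DifferentiableAt ℝ B p) (v : ℝ × ℝ) :
    fderiv ℝ (xmap A B) p v = (fderiv ℝ A p v, fderiv ℝ B p v) :=
  DFunLike.congr_fun (hA.fderiv_prodMk hB) v

lemma fderiv_cmap_apply (hC : DifferentiableAt ℝ C p) (hD : DifferentiableAt ℝ D p) (v : ℝ × ℝ) :
    fderiv ℝ (cmap C D) p v = (-fderiv ℝ D p v, fderiv ℝ C p v) :=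
  DFunLike.congr_fun (hD.hasFDerivAt.fun_neg.prodMk hC.hasFDerivAt).fderiv v

lemma det2_deriv_deriv_xmap_graph {τ : ℝ → ℝ} {s : ℝ}
    (hA : ContDiffAt ℝ 2 A (s, τ s)) (hB : ContDiffAt ℝ 2 B (s, τ s))
    (hC : ContDiffAt ℝ 2 C (s, τ s)) (hD : ContDiffAt ℝ 2 D (s, τ s)) (hτ : ContDiffAt ℝ 2 τ s)
    (hxs : xs A B (s, τ s) = (-pdt D (s, τ s), pdt C (s, τ s)))
    (hxt : xt A B (s, τ s) = (pds D (s, τ s), -pds C (s, τ s)))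
    (hinc : ∀ᶠ r in 𝓝 s, det2 (xmap A B (s, τ s) - xmap A B (r, τ r)) (cmap C D (r, τ r)) = 0) :
    det2 (deriv (deriv fun r ↦ xmap A B (r, τ r)) s) (cmap C D (s, τ s)) =
      2 * (1 + deriv τ s ^ 2) * deltaMap A B (s, τ s) := by
  have velocity : deriv (fun r ↦ (r, τ r)) s = (1, deriv τ s) :=
    ((hasDerivAt_id s).prodMk (hτ.differentiableAt two_ne_zero).hasDerivAt).deriv
  have fderiv_x := fderiv_xmap_apply (hA.differentiableAt two_ne_zero)
    (hB.differentiableAt two_ne_zero)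
  have fderiv_c := fderiv_cmap_apply (hC.differentiableAt two_ne_zero)
    (hD.differentiableAt two_ne_zero)
  have bracket := bracket_dssx_c_general det2Bilin det2Bilin_isAlt
    (x := xmap A B) (c := cmap C D) (γ := fun r ↦ (r, τ r))
    (hA.prodMk hB) (hD.neg.prodMk hC) (contDiffAt_id.prodMk hτ)
    ((fderiv_x _).trans (hxs.trans (fderiv_c _).symm))
    ((fderiv_x _).trans (hxt.trans (by simp [fderiv_c, pds]))) hinc
  calc det2 (deriv (deriv fun r ↦ xmap A B (r, τ r)) s) (cmap C D (s, τ s))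
      = 2 * (1 ^ 2 + deriv τ s ^ 2) * det2 (xs A B (s, τ s)) (xt A B (s, τ s)) := by
        rwa [velocity, fderiv_x, fderiv_x] at bracket
    _ = 2 * (1 + deriv τ s ^ 2) * deltaMap A B (s, τ s) := by
        rw [det2_xs_xt, one_pow]

end Coordinates

theorem bracket_dssx_c
    (Ω : Set (ℝ × ℝ)) (hΩ : IsOpen Ω)
    (A B C D : ℝ × ℝ → ℝ)
    (hA : ContDiffOn ℝ (⊤ : ℕ∞) A Ω) (hB : ContDiffOn ℝ (⊤ : ℕ∞) B Ω)
    (hC : ContDiffOn ℝ (⊤ : ℕ∞) C Ω) (hD : ContDiffOn ℝ (⊤ : ℕ∞) D Ω)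
    (hCR1 : ∀ p ∈ Ω, pds A p = - pdt D p)
    (hCR2 : ∀ p ∈ Ω, pdt A p = pds D p)
    (hCR3 : ∀ p ∈ Ω, pds B p = pdt C p)
    (hCR4 : ∀ p ∈ Ω, pdt B p = - pds C p)
    (s₀ t₀ : ℝ) (hst₀ : (s₀, t₀) ∈ Ω)
    (hne₀ : det2 (xt A B (s₀, t₀)) (cmap C D (s₀, t₀)) ≠ 0)
    (I : Set ℝ) (U : Set (ℝ × ℝ)) (hI : IsOpen I) (hU : IsOpen U)
    (hs₀ : s₀ ∈ I) (hx₀ : xmap A B (s₀, t₀) ∈ U)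
    (T : ℝ → ℝ × ℝ → ℝ)
    (hT : ContDiffOn ℝ (⊤ : ℕ∞) (fun q : ℝ × (ℝ × ℝ) => T q.1 q.2) (I ×ˢ U))
    (hT₀ : T s₀ (xmap A B (s₀, t₀)) = t₀)
    (hTmem : ∀ s ∈ I, ∀ xb ∈ U, (s, T s xb) ∈ Ω)
    (hTeq : ∀ s ∈ I, ∀ xb ∈ U,
      det2 (xb - xmap A B (s, T s xb)) (cmap C D (s, T s xb)) = 0)
    (s : ℝ) (xb : ℝ × ℝ) (hs : s ∈ I) (hxb : xb ∈ U)
    (hx : xb = xmap A B (s, T s xb))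
    :
    det2 (deriv (deriv (fun s' => xmap A B (s', T s' xb))) s) (cmap C D (s, T s xb))
      = 2 * (1 + (deriv (fun s' => T s' xb) s) ^ 2) * deltaMap A B (s, T s xb) := by
  have hp := hTmem s hs xb hxb
  have smooth {f : ℝ × ℝ → ℝ} (hf : ContDiffOn ℝ (⊤ : ℕ∞) f Ω) : ContDiffAt ℝ 2 f (s, T s xb) :=
    contDiffAt_infty.mp (hf.contDiffAt (hΩ.mem_nhds hp)) 2
  have hτ : ContDiffAt ℝ 2 (fun r ↦ T r xb) s :=
    (contDiffAt_infty.mp (hT.contDiffAt ((hI.prod hU).mem_nhds ⟨hs, hxb⟩)) 2).comp s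
      (contDiffAt_id.prodMk contDiffAt_const)
  refine det2_deriv_deriv_xmap_graph (smooth hA) (smooth hB) (smooth hC) (smooth hD) hτ
    (Prod.ext (hCR1 _ hp) (hCR3 _ hp)) (Prod.ext (hCR2 _ hp) (hCR4 _ hp)) ?_
  filter_upwards [hI.mem_nhds hs] with r hr
  rw [← hx]
  exact hTeq r hr xb hxb
end
end

section
/- Let (s,x̄) ∈ I × U with x̄ = x(s,t(s,x̄)), δ(s,t(s,x̄)) = 0, and [x_t(s,t(s,x̄)), c(s,t(s,x̄))] ≠ 0. Then ∂/∂s(x(s,t(s,x̄))) = x_s(s,t(s,x̄)) + t_s(s,x̄)·x_t(s,t(s,x̄)) = 0; equivalently, if α is defined by x_s + α·x_t = 0 at the singular point (s,t(s,x̄)), then α = t_s(s,x̄). -/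
noncomputable section

/-!
Fix `x̄` and let `v = x_s + t_s x_t` be the velocity at `s` of the curve `s' ↦ x(s', t(s', x̄))`,
which passes through `x̄` at `s' = s`. Dividing `[x̄ - x, c] = 0` by `s' - s` and letting `s' → s`
gives `[v, c] = 0`, while `δ = 0` gives `[v, x_t] = [x_s, x_t] = 0`. Since `x_t` and `c` are
linearly independent, `v = 0`.
-/

open scoped Topology

theorem det2_smul_left (a : ℝ) (u v : ℝ × ℝ) : det2 (a • u) v = a * det2 u v := by
  simp only [det2, Prod.smul_fst, Prod.smul_snd, smul_eq_mul]
  ring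

theorem det2_add_smul_right_self (u v : ℝ × ℝ) (a : ℝ) : det2 (u + a • v) v = det2 u v := by
  simp only [det2, Prod.fst_add, Prod.snd_add, Prod.smul_fst, Prod.smul_snd, smul_eq_mul]
  ring

theorem det2_smul_eq_sub (u v w : ℝ × ℝ) :
    det2 v w • u = det2 u w • v - det2 u v • w := by
  ext <;> simp only [det2, Prod.fst_sub, Prod.snd_sub, Prod.smul_fst, Prod.smul_snd,
    smul_eq_mul] <;> ring

theorem eq_zero_of_det2_eq_zero {u v w : ℝ × ℝ} (hvw : det2 v w ≠ 0)
    (huv : det2 u v = 0) (huw : det2 u w = 0) : u = 0 := by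
  have h : det2 v w • u = 0 := by rw [det2_smul_eq_sub, huv, huw, zero_smul, zero_smul, sub_zero]
  exact (smul_eq_zero.mp h).resolve_left hvw

theorem left_ne_zero_of_det2_ne_zero {u v : ℝ × ℝ} (h : det2 u v ≠ 0) : u ≠ 0 := by
  rintro rfl
  simp [det2] at h

theorem continuous_det2 : Continuous fun p : (ℝ × ℝ) × (ℝ × ℝ) => det2 p.1 p.2 := by
  unfold det2
  fun_prop

theorem deltaMap_eq_det2 (A B : ℝ × ℝ → ℝ) (p : ℝ × ℝ) :
    deltaMap A B p = det2 (xs A B p) (xt A B p) := by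
  simp only [deltaMap, det2, xs, xt, mul_comm]

theorem det2_eq_zero_of_hasDerivAt_of_frequently {γ c : ℝ → ℝ × ℝ} {v : ℝ × ℝ} {s : ℝ}
    (hγ : HasDerivAt γ v s) (hc : ContinuousAt c s)
    (h : ∃ᶠ s' in 𝓝[≠] s, det2 (γ s - γ s') (c s') = 0) : det2 v (c s) = 0 := by
  have slope_det2 : ∀ s', det2 (γ s - γ s') (c s') = 0 → det2 (slope γ s s') (c s') = 0 := by
    intro s' hs'
    rw [slope_comm, slope_def_module, det2_smul_left, hs', mul_zero]
  have slope_tendsto := hasDerivAt_iff_tendsto_slope.mp hγ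
  have c_tendsto := hc.tendsto.mono_left (nhdsWithin_le_nhds (s := {s}ᶜ))
  have det2_tendsto := (continuous_det2.tendsto (v, c s)).comp
    (slope_tendsto.prodMk_nhds c_tendsto)
  exact isClosed_singleton.mem_of_frequently_of_tendsto (h.mono slope_det2) det2_tendsto

theorem differentiableAt_left_of_uncurry {𝕜 E F G : Type*} [NontriviallyNormedField 𝕜]
    [NormedAddCommGroup E] [NormedSpace 𝕜 E] [NormedAddCommGroup F] [NormedSpace 𝕜 F]
    [NormedAddCommGroup G] [NormedSpace 𝕜 G] {f : E → F → G} {a : E} {b : F}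
    (hf : DifferentiableAt 𝕜 (fun q : E × F => f q.1 q.2) (a, b)) :
    DifferentiableAt 𝕜 (fun a' => f a' b) a :=
  hf.comp (f := fun a' => (a', b)) a (by fun_prop)

theorem hasDerivAt_comp_graph {f : ℝ × ℝ → ℝ} {τ : ℝ → ℝ} {s τ' : ℝ}
    (hf : DifferentiableAt ℝ f (s, τ s)) (hτ : HasDerivAt τ τ' s) :
    HasDerivAt (fun s' => f (s', τ s')) (pds f (s, τ s) + τ' * pdt f (s, τ s)) s := by
  have hgraph : HasDerivAt (fun s' => (s', τ s')) ((1 : ℝ), τ') s := (hasDerivAt_id s).prodMk hτ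
  have hdecomp : ((1 : ℝ), τ') = (1, 0) + τ' • ((0 : ℝ), (1 : ℝ)) := by simp
  have hcomp := hf.hasFDerivAt.comp_hasDerivAt (f := fun s' => (s', τ s')) s hgraph
  rwa [hdecomp, map_add, map_smul] at hcomp

theorem hasDerivAt_xmap_comp_graph {A B : ℝ × ℝ → ℝ} {τ : ℝ → ℝ} {s τ' : ℝ}
    (hA : DifferentiableAt ℝ A (s, τ s)) (hB : DifferentiableAt ℝ B (s, τ s))
    (hτ : HasDerivAt τ τ' s) :
    HasDerivAt (fun s' => xmap A B (s', τ s')) (xs A B (s, τ s) + τ' • xt A B (s, τ s)) s :=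
  (hasDerivAt_comp_graph hA hτ).prodMk (hasDerivAt_comp_graph hB hτ)

theorem dsx_vanishes_on_singular_set_general {A B : ℝ × ℝ → ℝ} {c : ℝ × ℝ → ℝ × ℝ}
    {τ : ℝ → ℝ} {s τ' : ℝ} {xb : ℝ × ℝ}
    (hA : DifferentiableAt ℝ A (s, τ s)) (hB : DifferentiableAt ℝ B (s, τ s))
    (hc : ContinuousAt c (s, τ s)) (hτ : HasDerivAt τ τ' s)
    (hcol : ∃ᶠ s' in 𝓝[≠] s, det2 (xb - xmap A B (s', τ s')) (c (s', τ s')) = 0)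
    (hx : xb = xmap A B (s, τ s)) (hδ : deltaMap A B (s, τ s) = 0)
    (hne : det2 (xt A B (s, τ s)) (c (s, τ s)) ≠ 0) :
    HasDerivAt (fun s' => xmap A B (s', τ s')) (xs A B (s, τ s) + τ' • xt A B (s, τ s)) s ∧
    xs A B (s, τ s) + τ' • xt A B (s, τ s) = 0 ∧
    ∀ α : ℝ, xs A B (s, τ s) + α • xt A B (s, τ s) = 0 → α = τ' := by
  subst hx
  have hderiv := hasDerivAt_xmap_comp_graph hA hB hτ
  have hc_graph : ContinuousAt (fun s' => c (s', τ s')) s :=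
    ContinuousAt.comp (f := fun s' => (s', τ s')) hc (continuousAt_id.prodMk hτ.continuousAt)
  have hdet_c := det2_eq_zero_of_hasDerivAt_of_frequently hderiv hc_graph hcol
  have hdet_xt : det2 (xs A B (s, τ s) + τ' • xt A B (s, τ s)) (xt A B (s, τ s)) = 0 := by
    rw [det2_add_smul_right_self, ← deltaMap_eq_det2, hδ]
  have hzero := eq_zero_of_det2_eq_zero hne hdet_xt hdet_c
  refine ⟨hderiv, hzero, fun α hα => ?_⟩
  exact smul_left_injective ℝ (left_ne_zero_of_det2_ne_zero hne)
    (add_left_cancel (hα.trans hzero.symm))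

theorem dsx_vanishes_on_singular_set
    (Ω : Set (ℝ × ℝ)) (hΩ : IsOpen Ω)
    (A B C D : ℝ × ℝ → ℝ)
    (hA : ContDiffOn ℝ (⊤ : ℕ∞) A Ω) (hB : ContDiffOn ℝ (⊤ : ℕ∞) B Ω)
    (hC : ContDiffOn ℝ (⊤ : ℕ∞) C Ω) (hD : ContDiffOn ℝ (⊤ : ℕ∞) D Ω)
    (hCR1 : ∀ p ∈ Ω, pds A p = - pdt D p)
    (hCR2 : ∀ p ∈ Ω, pdt A p = pds D p)
    (hCR3 : ∀ p ∈ Ω, pds B p = pdt C p)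
    (hCR4 : ∀ p ∈ Ω, pdt B p = - pds C p)
    (s₀ t₀ : ℝ) (hst₀ : (s₀, t₀) ∈ Ω)
    (hne₀ : det2 (xt A B (s₀, t₀)) (cmap C D (s₀, t₀)) ≠ 0)
    (I : Set ℝ) (U : Set (ℝ × ℝ)) (hI : IsOpen I) (hU : IsOpen U)
    (hs₀ : s₀ ∈ I) (hx₀ : xmap A B (s₀, t₀) ∈ U)
    (T : ℝ → ℝ × ℝ → ℝ)
    (hT : ContDiffOn ℝ (⊤ : ℕ∞) (fun q : ℝ × (ℝ × ℝ) => T q.1 q.2) (I ×ˢ U))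
    (hT₀ : T s₀ (xmap A B (s₀, t₀)) = t₀)
    (hTmem : ∀ s ∈ I, ∀ xb ∈ U, (s, T s xb) ∈ Ω)
    (hTeq : ∀ s ∈ I, ∀ xb ∈ U,
      det2 (xb - xmap A B (s, T s xb)) (cmap C D (s, T s xb)) = 0)
    (s : ℝ) (xb : ℝ × ℝ) (hs : s ∈ I) (hxb : xb ∈ U)
    (hx : xb = xmap A B (s, T s xb))
    (hδ : deltaMap A B (s, T s xb) = 0)
    (hne : det2 (xt A B (s, T s xb)) (cmap C D (s, T s xb)) ≠ 0)
    :
    deriv (fun s' => xmap A B (s', T s' xb)) s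
        = xs A B (s, T s xb) + (deriv (fun s' => T s' xb) s) • xt A B (s, T s xb) ∧
    xs A B (s, T s xb) + (deriv (fun s' => T s' xb) s) • xt A B (s, T s xb) = 0 ∧
    ∀ α : ℝ, xs A B (s, T s xb) + α • xt A B (s, T s xb) = 0 →
      α = deriv (fun s' => T s' xb) s := by
  have hΩp : Ω ∈ 𝓝 (s, T s xb) := hΩ.mem_nhds (hTmem s hs xb hxb)
  have hTp := hT.contDiffAt ((hI.prod hU).mem_nhds (Set.mk_mem_prod hs hxb))
  have hcol : ∀ᶠ s' in 𝓝 s, det2 (xb - xmap A B (s', T s' xb)) (cmap C D (s', T s' xb)) = 0 :=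
    (hI.eventually_mem hs).mono fun s' hs' => hTeq s' hs' xb hxb
  have ⟨hderiv, hrest⟩ := dsx_vanishes_on_singular_set_general
    ((hA.contDiffAt hΩp).differentiableAt (by simp))
    ((hB.contDiffAt hΩp).differentiableAt (by simp))
    ((hD.continuousOn.neg.prodMk hC.continuousOn).continuousAt hΩp)
    (differentiableAt_left_of_uncurry (hTp.differentiableAt (by simp))).hasDerivAt
    (hcol.filter_mono nhdsWithin_le_nhds).frequently hx hδ hne
  exact ⟨hderiv.deriv, hrest⟩
end
end
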